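/- arXiv:2004.05555 — 13 statements merged into one kernel-verified Lean document; each statement's English description precedes it below -/
import Mathlib

section
/- Let G be a group and λ : G → Aut(G) a group homomorphism, writing λ_a for λ(a). Then the set H_λ = {(λ_a, a) : a ∈ G} is a subgroup of the holomorph Hol G = Aut(G) ⋉ G if and only if b⁻¹·λ_a(b) ∈ ker λ for all a, b ∈ G. -/
/-- The holomorph of a group `G`: the semidirect product `Aut(G) ⋉ G` whose
multiplication is `(f, a) * (g, b) = (f * g, a * f b)`.  (In Mathlib's
`SemidirectProduct` convention the group component is the `left` field and the
automorphism component is the `right` field.) -/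
abbrev Hol (G : Type*) [Group G] : Type _ :=
  SemidirectProduct G (MulAut G) (MonoidHom.id (MulAut G))

/-- For a group homomorphism `λ : G →* Aut G`, the set
`H_λ = {(λ_a, a) | a ∈ G}` is a subgroup of `Hol G` if and only if
`b⁻¹ * λ_a b ∈ ker λ` for all `a b : G`. -/
theorem stmt0 {G : Type*} [Group G] (lam : G →* MulAut G) :
    (∃ H : Subgroup (Hol G),
        (H : Set (Hol G)) = {x : Hol G | ∃ a : G, x = ⟨a, lam a⟩}) ↔
      ∀ a b : G, b⁻¹ * lam a b ∈ lam.ker := by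
  constructor
  · rintro ⟨H, hH⟩ a b
    have mem : ∀ x : Hol G, x ∈ H ↔ ∃ a : G, x = ⟨a, lam a⟩ := fun x => by
      rw [← SetLike.mem_coe, hH]; rfl
    obtain ⟨c, hc⟩ := (mem _).1 (H.mul_mem ((mem _).2 ⟨a, rfl⟩) ((mem _).2 ⟨b, rfl⟩))
    have h1 : a * lam a b = c := congrArg SemidirectProduct.left hc
    have h2 : lam a * lam b = lam c := congrArg SemidirectProduct.right hc
    rw [← h1, map_mul] at h2
    have h3 := mul_left_cancel h2
    rw [MonoidHom.mem_ker, map_mul, map_inv, ← h3, inv_mul_cancel]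
  · intro h
    have key : ∀ a b : G, lam (lam a b) = lam b := fun a b => by
      have := h a b
      rw [MonoidHom.mem_ker, map_mul, map_inv, inv_mul_eq_one] at this
      exact this.symm
    refine ⟨{ carrier := {x : Hol G | ∃ a : G, x = ⟨a, lam a⟩}
              mul_mem' := ?_
              one_mem' := ⟨1, ?_⟩
              inv_mem' := ?_ }, rfl⟩
    · rintro _ _ ⟨a, rfl⟩ ⟨b, rfl⟩
      refine ⟨a * lam a b, SemidirectProduct.ext rfl ?_⟩
      change lam a * lam b = lam (a * lam a b)
      rw [map_mul, key]
    · exact SemidirectProduct.ext rfl (map_one lam).symm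
    · rintro _ ⟨a, rfl⟩
      refine ⟨lam a⁻¹ a⁻¹, SemidirectProduct.ext ?_ ?_⟩
      · change (lam a)⁻¹ a⁻¹ = lam a⁻¹ a⁻¹
        rw [map_inv lam]
      · change (lam a)⁻¹ = lam (lam a⁻¹ a⁻¹)
        rw [key, map_inv]
end

section
/- Let G be a group and λ : G → Aut(G) a group homomorphism, writing λ_a for λ(a), such that b⁻¹·λ_a(b) ∈ ker λ for all a, b ∈ G. Then the subgroup H_λ = {(λ_a, a) : a ∈ G} of Hol G is regular: for every b ∈ G there exists a unique a ∈ G with a·λ_a(b) = 1, namely a = λ_{b⁻¹}(b⁻¹). -/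
/-- If `λ : G →* Aut G` is a group homomorphism satisfying
`b⁻¹ * λ_a b ∈ ker λ` for all `a b : G`, then `H_λ = {(λ_a, a) | a ∈ G}` is a
subgroup of `Hol G` and it is regular: for every `b : G` there is a unique
`a : G` with `a * λ_a b = 1`, namely `a = λ_{b⁻¹} (b⁻¹)`. -/
theorem stmt1 {G : Type*} [Group G] (lam : G →* MulAut G)
    (h : ∀ a b : G, b⁻¹ * lam a b ∈ lam.ker) :
    (∃ H : Subgroup (Hol G),
        (H : Set (Hol G)) = {x : Hol G | ∃ a : G, x = ⟨a, lam a⟩}) ∧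
      ∀ b a : G, a * lam a b = 1 ↔ a = lam b⁻¹ b⁻¹ := by
  have key : ∀ a b : G, lam (lam a b) = lam b := by
    intro a b
    have h1 := h a b
    rw [MonoidHom.mem_ker, map_mul, map_inv, inv_mul_eq_one] at h1
    exact h1.symm
  refine ⟨⟨{ carrier := {x : Hol G | ∃ a : G, x = ⟨a, lam a⟩}
             mul_mem' := ?_
             one_mem' := ?_
             inv_mem' := ?_ }, rfl⟩, ?_⟩
  · rintro _ _ ⟨a, rfl⟩ ⟨b, rfl⟩
    refine ⟨a * lam a b, ?_⟩
    ext1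
    · rfl
    · change lam a * lam b = lam (a * lam a b)
      rw [map_mul, key]
  · refine ⟨1, ?_⟩
    ext1
    · rfl
    · exact (map_one lam).symm
  · rintro _ ⟨a, rfl⟩
    refine ⟨lam a⁻¹ a⁻¹, ?_⟩
    ext1
    · change (lam a)⁻¹ a⁻¹ = lam a⁻¹ a⁻¹
      rw [map_inv lam]
    · change (lam a)⁻¹ = lam (lam a⁻¹ a⁻¹)
      rw [key, map_inv]
  · intro b a
    constructor
    · intro e
      have e2 : lam a = lam b⁻¹ := by
        have e3 := congrArg lam e
        rw [map_mul, key, map_one] at e3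
        rw [map_inv]
        exact eq_inv_of_mul_eq_one_left e3
      rw [← e2, map_inv]
      exact eq_inv_of_mul_eq_one_left e
    · intro e
      have e2 : lam a = lam b⁻¹ := by rw [e, key]
      rw [e2, e, ← map_mul, inv_mul_cancel, map_one]
end

section
/- Let (G,·,∘) be a λ-homomorphic skew left brace and set G₀ = {a ∈ G : λ_a = id} (the kernel of λ). Then: (i) G₀ is a normal subgroup of both (G,·) and (G,∘); (ii) the two operations coincide on G₀, i.e., a ∘ b = a·b whenever a ∈ G₀; and (iii) (a·b)⁻¹·(a∘b) ∈ G₀ for all a, b ∈ G, so the operations induced by · and ∘ on the quotient G/G₀ coincide. In particular every λ-homomorphic skew left brace is meta-trivial (an extension of a trivial skew brace by a trivial skew brace). -/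
/-- A skew left brace structure on a group `(G, ·)`: a second group operation
`circ` (with inverse `cinv`, and necessarily with the same identity element `1`)
satisfying the skew brace compatibility law
`a ∘ (b * c) = (a ∘ b) * a⁻¹ * (a ∘ c)`. -/
structure SkewBrace (G : Type*) [Group G] where
  circ : G → G → G
  cinv : G → G
  circ_assoc : ∀ a b c : G, circ (circ a b) c = circ a (circ b c)
  one_circ : ∀ a : G, circ 1 a = a
  circ_one : ∀ a : G, circ a 1 = a
  cinv_circ : ∀ a : G, circ (cinv a) a = 1
  circ_cinv : ∀ a : G, circ a (cinv a) = 1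
  compat : ∀ a b c : G, circ a (b * c) = circ a b * a⁻¹ * circ a c

/-- Let `(G, ·, ∘)` be a λ-homomorphic skew left brace (the
map `λ_a (b) = a⁻¹ * (a ∘ b)` is multiplicative in `a` with respect to `·`),
and let `G₀ = ker λ = {a | ∀ b, a ∘ b = a * b}`.  Then `G₀` is a normal
subgroup of `(G, ·)`, a normal subgroup of `(G, ∘)`, the two operations
coincide on `G₀`, and `(a * b)⁻¹ * (a ∘ b) ∈ G₀` for all `a b : G` (so the
operations induced on the quotient `G/G₀` coincide); hence the brace is
meta-trivial. -/
theorem stmt3 {G : Type*} [Group G] (B : SkewBrace G)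
    (hlam : ∀ a b c : G,
      (a * b)⁻¹ * B.circ (a * b) c = a⁻¹ * B.circ a (b⁻¹ * B.circ b c)) :
    ∃ N : Subgroup G,
      ((N : Set G) = {a : G | ∀ b : G, B.circ a b = a * b}) ∧
      N.Normal ∧
      (∀ a ∈ N, ∀ b ∈ N, B.circ a b ∈ N) ∧
      (∀ a ∈ N, B.cinv a ∈ N) ∧
      (∀ g : G, ∀ a ∈ N, B.circ (B.circ g a) (B.cinv g) ∈ N) ∧
      (∀ a ∈ N, ∀ b : G, B.circ a b = a * b) ∧
      (∀ a b : G, (a * b)⁻¹ * B.circ a b ∈ N) := by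
  have hmul : ∀ a b c : G, a⁻¹ * B.circ a (b * c) = a⁻¹ * B.circ a b * (a⁻¹ * B.circ a c) := by
    intro a b c
    rw [B.compat]
    group
  let L : G → Monoid.End G := fun a =>
    MonoidHom.mk' (fun b => a⁻¹ * B.circ a b) (hmul a)
  have hL : ∀ a b, L a b = a⁻¹ * B.circ a b := fun a b => rfl
  let f : G →* Monoid.End G :=
    { toFun := L
      map_one' := by
        ext b
        rw [hL, B.one_circ]
        simp
      map_mul' := by
        intro a b
        ext c
        exact hlam a b c }
  have hf : ∀ a b, f a b = a⁻¹ * B.circ a b := fun a b => rfl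
  have hc : ∀ a b, f (B.circ a b) = f a * f b := by
    intro a b
    ext c
    change (B.circ a b)⁻¹ * B.circ (B.circ a b) c = a⁻¹ * B.circ a (b⁻¹ * B.circ b c)
    have h1 : B.circ a (b * (b⁻¹ * B.circ b c)) = B.circ a b * a⁻¹ * B.circ a (b⁻¹ * B.circ b c) :=
      B.compat _ _ _
    rw [mul_inv_cancel_left] at h1
    rw [B.circ_assoc, h1]
    group
  have hmem : ∀ a, a ∈ f.ker ↔ ∀ b, B.circ a b = a * b := by
    intro a
    rw [MonoidHom.mem_ker]
    constructor
    · intro h b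
      have h2 := hf a b
      rw [h] at h2
      change b = _ at h2
      exact (eq_inv_mul_iff_mul_eq.mp h2).symm
    · intro h
      ext b
      rw [hf, h b]
      simp
  refine ⟨f.ker, ?_, inferInstance, ?_, ?_, ?_, fun a ha => (hmem a).1 ha, ?_⟩
  · ext a
    exact hmem a
  · intro a ha b hb
    rw [MonoidHom.mem_ker] at *
    rw [hc, ha, hb, one_mul]
  · intro a ha
    rw [MonoidHom.mem_ker] at *
    have h := hc (B.cinv a) a
    rw [B.cinv_circ, map_one, ha, mul_one] at h
    exact h.symm
  · intro g a ha
    rw [MonoidHom.mem_ker] at *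
    rw [hc, hc, ha, mul_one, ← hc, B.circ_cinv, map_one]
  · intro a b
    rw [MonoidHom.mem_ker, map_mul, hc, ← map_mul, ← map_mul, inv_mul_cancel, map_one]
end

section
/- Let G be a group generated by a subset X (i.e., the subgroup generated by X is all of G), and let λ : G → Aut(G) be a group homomorphism, writing λ_a for λ(a). If x⁻¹·λ_y(x) ∈ ker λ for all x, y ∈ X, then b⁻¹·λ_a(b) ∈ ker λ for all a, b ∈ G. -/
/-- Let `G` be a group generated by a subset `X` and let
`λ : G →* Aut G` be a group homomorphism.  If `x⁻¹ * λ_y x ∈ ker λ` for all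
`x, y ∈ X`, then `b⁻¹ * λ_a b ∈ ker λ` for all `a b : G`. -/
theorem stmt4 {G : Type*} [Group G] (X : Set G) (hX : Subgroup.closure X = ⊤)
    (lam : G →* MulAut G)
    (h : ∀ x ∈ X, ∀ y ∈ X, x⁻¹ * lam y x ∈ lam.ker) :
    ∀ a b : G, b⁻¹ * lam a b ∈ lam.ker := by
  have key : ∀ a b : G, b⁻¹ * lam a b ∈ lam.ker ↔ lam (lam a b) = lam b := by
    intro a b
    rw [MonoidHom.mem_ker, map_mul, map_inv, inv_mul_eq_one, eq_comm]
  have h1 : ∀ y ∈ X, ∀ b, lam (lam y b) = lam b := by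
    intro y hy b
    have hb : b ∈ Subgroup.closure X := hX ▸ Subgroup.mem_top b
    induction hb using Subgroup.closure_induction with
    | mem x hx => exact (key y x).1 (h x hx y hy)
    | one => simp
    | mul u v _ _ hu hv => rw [map_mul, map_mul, map_mul, hu, hv]
    | inv u _ hu => rw [map_inv, map_inv, map_inv, hu]
  intro a
  have ha : a ∈ Subgroup.closure X := hX ▸ Subgroup.mem_top a
  suffices hs : ∀ b, lam (lam a b) = lam b from fun b => (key a b).2 (hs b)
  induction ha using Subgroup.closure_induction with
  | mem x hx => exact h1 x hx
  | one => simp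
  | mul u v _ _ hu hv =>
    intro b
    rw [map_mul, MulAut.mul_apply, hu, hv]
  | inv u _ hu =>
    intro b
    rw [← hu (lam u⁻¹ b), ← MulAut.mul_apply, ← map_mul, mul_inv_cancel, map_one,
      MulAut.one_apply]
end

section
/- Let F_n be the free group on free generators x₁, …, xₙ, and let φ₁, …, φₙ be pairwise commuting IA-automorphisms of F_n (i.e., w⁻¹·φᵢ(w) lies in the commutator subgroup F_n' for every w ∈ F_n and every i). Let λ : F_n → Aut(F_n) be the homomorphism determined by λ(xᵢ) = φᵢ for each i. Then b⁻¹·λ_a(b) ∈ ker λ for all a, b ∈ F_n, and consequently H_λ = {(λ_a, a) : a ∈ F_n} is a regular subgroup of Hol F_n. -/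
/-- Let `F_n` be the free group on `x₁, …, xₙ`, and let
`φ₁, …, φₙ` be pairwise commuting IA-automorphisms of `F_n` (so
`w⁻¹ * φᵢ w` lies in the commutator subgroup for every `w`).  Let
`λ : F_n →* Aut F_n` be the homomorphism with `λ (xᵢ) = φᵢ`.  Then
`b⁻¹ * λ_a b ∈ ker λ` for all `a b`, and `H_λ = {(λ_a, a)}` is a regular
subgroup of `Hol F_n`. -/
theorem stmt5 {n : ℕ} (φ : Fin n → MulAut (FreeGroup (Fin n)))
    (hcomm : ∀ i j : Fin n, φ i * φ j = φ j * φ i)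
    (hIA : ∀ i : Fin n, ∀ w : FreeGroup (Fin n),
      w⁻¹ * φ i w ∈ commutator (FreeGroup (Fin n))) :
    (∀ a b : FreeGroup (Fin n),
      b⁻¹ * (FreeGroup.lift φ) a b ∈ (FreeGroup.lift φ).ker) ∧
    ∃ H : Subgroup (Hol (FreeGroup (Fin n))),
      ((H : Set (Hol (FreeGroup (Fin n)))) =
        {x : Hol (FreeGroup (Fin n)) |
          ∃ a : FreeGroup (Fin n), x = ⟨a, FreeGroup.lift φ a⟩}) ∧
      ∀ b : FreeGroup (Fin n), ∃! a : FreeGroup (Fin n),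
        a * (FreeGroup.lift φ) a b = 1 := by
  set L := FreeGroup.lift φ with hL
  have hLof : ∀ i, L (FreeGroup.of i) = φ i := fun i => by simp [hL]
  have h1 : ∀ i a, Commute (φ i) (L a) := by
    intro i a
    induction a using FreeGroup.induction_on with
    | C1 => rw [map_one]; exact Commute.one_right _
    | of j => rw [hLof]; exact hcomm i j
    | inv_of j h => rw [map_inv]; exact h.inv_right
    | mul x y hx hy => rw [map_mul]; exact hx.mul_right hy
  have h2 : ∀ b a, Commute (L b) (L a) := by
    intro b a
    induction b using FreeGroup.induction_on with
    | C1 => rw [map_one]; exact Commute.one_left _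
    | of j => rw [hLof]; exact h1 j a
    | inv_of j h => rw [map_inv]; exact h.inv_left
    | mul x y hx hy => rw [map_mul]; exact hx.mul_left hy
  have h3 : commutator (FreeGroup (Fin n)) ≤ L.ker := by
    rw [commutator_def, Subgroup.commutator_le]
    intro a _ b _
    rw [MonoidHom.mem_ker, map_commutatorElement, commutatorElement_eq_one_iff_commute]
    exact h2 a b
  have h4 : ∀ a b, b⁻¹ * L a b ∈ commutator (FreeGroup (Fin n)) := by
    intro a
    induction a using FreeGroup.induction_on with
    | C1 => intro b; simp
    | of j => intro b; rw [hLof]; exact hIA j b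
    | inv_of j h =>
      intro b
      have := inv_mem (h ((L (FreeGroup.of j))⁻¹ b))
      rw [map_inv]
      simpa using this
    | mul x y hx hy =>
      intro b
      have := mul_mem (hy b) (hx (L y b))
      simpa [mul_assoc] using this
  have h5 : ∀ a b, b⁻¹ * L a b ∈ L.ker := fun a b => h3 (h4 a b)
  have h6 : ∀ a b, L (L a b) = L b := by
    intro a b
    have := h5 a b
    rw [MonoidHom.mem_ker, map_mul, map_inv, inv_mul_eq_one] at this
    exact this.symm
  refine ⟨h5, ⟨⟨⟨{x | ∃ a, x = ⟨a, L a⟩}, ?_⟩, ?_⟩, ?_⟩, rfl, ?_⟩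
  · rintro _ _ ⟨a, rfl⟩ ⟨b, rfl⟩
    refine ⟨a * L a b, ?_⟩
    ext1
    · simp
    · simp [h6]
  · exact ⟨1, by ext1 <;> simp⟩
  · rintro _ ⟨a, rfl⟩
    refine ⟨L a⁻¹ a⁻¹, ?_⟩
    ext1
    · simp
    · rw [h6]; simp
  · intro b
    refine ⟨(L b⁻¹ b)⁻¹, ?_, ?_⟩
    · have : L (L b⁻¹ b)⁻¹ = L b⁻¹ := by rw [map_inv, h6, map_inv]
      show (L b⁻¹ b)⁻¹ * L (L b⁻¹ b)⁻¹ b = 1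
      rw [this, inv_mul_cancel]
    · intro a ha
      have ha : a * L a b = 1 := ha
      have h := congrArg L ha
      rw [map_mul, h6, map_one, mul_eq_one_iff_eq_inv, ← map_inv] at h
      rw [← h]
      exact mul_eq_one_iff_eq_inv.mp ha
end

section
/- Let G be a group, l : G → ℤ a group homomorphism, and φ an automorphism of G satisfying l(φ(w)) = l(w) for all w ∈ G. Then the set H = {(φ^{l(w)}, w) : w ∈ G} is a regular subgroup of the holomorph Hol G; for each u ∈ G, the unique element (φ^{l(v)}, v) ∈ H with v·φ^{l(v)}(u) = 1 is given by v = φ^{−l(u)}(u⁻¹). -/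
/-- Let `G` be a group, `l : G → ℤ` a group homomorphism and
`φ` an automorphism of `G` with `l (φ w) = l w` for all `w`.  Then
`H = {(φ^{l w}, w) | w ∈ G}` is a regular subgroup of `Hol G`; for each
`u : G` the unique `v : G` with `v * φ^{l v} u = 1` is `v = φ^{-l u} (u⁻¹)`. -/
theorem stmt6 {G : Type*} [Group G] (l : G → ℤ)
    (hl : ∀ u v : G, l (u * v) = l u + l v)
    (φ : MulAut G) (hφ : ∀ w : G, l (φ w) = l w) :
    ∃ H : Subgroup (Hol G),
      ((H : Set (Hol G)) = {x : Hol G | ∃ w : G, x = ⟨w, φ ^ l w⟩}) ∧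
      ∀ u v : G, v * (φ ^ l v) u = 1 ↔ v = (φ ^ (-(l u))) u⁻¹ := by
  have h1 : l 1 = 0 := by
    have := hl 1 1
    rw [mul_one] at this
    omega
  have hinv : ∀ w : G, l w⁻¹ = -l w := by
    intro w
    have := hl w w⁻¹
    rw [mul_inv_cancel, h1] at this
    omega
  have hsymm : ∀ w : G, l (φ⁻¹ w) = l w := by
    intro w
    have := hφ (φ⁻¹ w)
    rw [MulAut.apply_inv_self] at this
    exact this.symm
  have hpow : ∀ (n : ℤ) (w : G), l ((φ ^ n) w) = l w := by
    intro n
    induction n with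
    | zero => intro w; simp
    | succ n ih =>
      intro w
      rw [zpow_add_one, MulAut.mul_apply, ih, hφ]
    | pred n ih =>
      intro w
      rw [zpow_sub_one, MulAut.mul_apply, ih, hsymm]
  refine ⟨{ carrier := {x : Hol G | ∃ w : G, x = ⟨w, φ ^ l w⟩}
            mul_mem' := ?_
            one_mem' := ?_
            inv_mem' := ?_ }, rfl, ?_⟩
  · rintro _ _ ⟨a, rfl⟩ ⟨b, rfl⟩
    refine ⟨a * (φ ^ l a) b, ?_⟩
    ext1
    · rfl
    · simp only [SemidirectProduct.mul_right]
      rw [hl, hpow, zpow_add]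
  · refine ⟨1, ?_⟩
    ext1
    · simp
    · simp [h1]
  · rintro _ ⟨a, rfl⟩
    refine ⟨(φ ^ (-l a)) a⁻¹, ?_⟩
    ext1
    · rw [zpow_neg]
      rfl
    · simp only [SemidirectProduct.inv_right]
      rw [hpow, hinv, zpow_neg]
  · intro u v
    constructor
    · intro h
      have h2 : l v = -l u := by
        have := congrArg l h
        rw [hl, hpow, h1] at this
        omega
      rw [h2] at h
      rw [map_inv]
      exact eq_inv_of_mul_eq_one_left h
    · rintro rfl
      rw [hpow, hinv, ← map_mul, inv_mul_cancel, map_one]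
end

section
/- Let F₂ be the free group on free generators x and y, let θ be the automorphism of F₂ interchanging x and y, and let H₀ be the kernel of the homomorphism F₂ → ℤ/2ℤ sending both x and y to the generator (so H₀ consists of words of even length). Define a∘b = a·b if a ∈ H₀ and a∘b = a·θ(b) if a ∉ H₀. Then (F₂, ·, ∘) is a skew left brace and the group (F₂, ∘) is a free group of rank 2. -/
/-- The circle group of a skew brace, as a type synonym. -/
def CircGroup {G : Type*} [Group G] (_S : SkewBrace G) : Type _ := G

instance {G : Type*} [Group G] (S : SkewBrace G) : Group (CircGroup S) where
  mul := S.circ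
  one := (1 : G)
  inv := S.cinv
  mul_assoc := S.circ_assoc
  one_mul := S.one_circ
  mul_one := S.circ_one
  inv_mul_cancel := S.cinv_circ

/-- The brace attached to `τ : G → Aut G` with `τ (τ a b) = τ b`. -/
def braceOf {G : Type*} [Group G] (τ : G →* MulAut G)
    (h : ∀ a b, τ (τ a b) = τ b) : SkewBrace G where
  circ a b := a * τ a b
  cinv a := (τ a)⁻¹ a⁻¹
  circ_assoc a b c := by simp [h, mul_assoc]
  one_circ a := by simp
  circ_one a := by simp
  cinv_circ a := by
    have : τ ((τ a)⁻¹ a⁻¹) = (τ a)⁻¹ := by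
      rw [← map_inv τ a, h]
    rw [this, ← map_mul]; simp
  circ_cinv a := by rw [MulAut.apply_inv_self, mul_inv_cancel]
  compat a b c := by simp [mul_assoc]

/-- Let `F₂` be the free group on `x, y`, let `θ` be the
automorphism interchanging `x` and `y`, and let `H₀` be the kernel of the
homomorphism `F₂ → ℤ/2ℤ` sending both generators to the generator of `ℤ/2ℤ`.
Define `a ∘ b = a * b` for `a ∈ H₀` and `a ∘ b = a * θ b` for `a ∉ H₀`.
Then `(F₂, ·, ∘)` is a skew left brace and `(F₂, ∘)` is a free group of
rank 2. -/
theorem stmt8 (θ : MulAut (FreeGroup (Fin 2)))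
    (hθx : θ (FreeGroup.of 0) = FreeGroup.of 1)
    (hθy : θ (FreeGroup.of 1) = FreeGroup.of 0)
    (f : FreeGroup (Fin 2) →* Multiplicative (ZMod 2))
    (hfx : f (FreeGroup.of 0) = Multiplicative.ofAdd 1)
    (hfy : f (FreeGroup.of 1) = Multiplicative.ofAdd 1) :
    ∃ S : SkewBrace (FreeGroup (Fin 2)),
      (∀ a ∈ f.ker, ∀ b : FreeGroup (Fin 2), S.circ a b = a * b) ∧
      (∀ a ∉ f.ker, ∀ b : FreeGroup (Fin 2), S.circ a b = a * θ b) ∧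
      ∃ e : FreeGroup (Fin 2) ≃ FreeGroup (Fin 2),
        ∀ a b : FreeGroup (Fin 2), e (S.circ a b) = e a * e b := by
  have hθθ : ∀ a, θ (θ a) = a := by
    have : (θ.toMonoidHom.comp θ.toMonoidHom) = MonoidHom.id _ := by
      ext i; fin_cases i <;> simp [hθx, hθy]
    exact fun a => DFunLike.congr_fun this a
  have hθinv : θ⁻¹ = θ := by
    rw [inv_eq_iff_mul_eq_one]; ext1 a; exact hθθ a
  have hθ2 : θ * θ = 1 := by ext1 a; exact hθθ a
  let τ : FreeGroup (Fin 2) →* MulAut (FreeGroup (Fin 2)) := FreeGroup.lift (fun _ => θ)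
  have hτo : ∀ i, τ (FreeGroup.of i) = θ := fun i => by simp [τ]
  have hτθ : ∀ a, τ (θ a) = τ a := by
    have : τ.comp θ.toMonoidHom = τ := by
      ext1 i; fin_cases i <;> simp [hθx, hθy, hτo]
    exact fun a => DFunLike.congr_fun this a
  have h11 : (Multiplicative.ofAdd 1 : Multiplicative (ZMod 2)) * Multiplicative.ofAdd 1 = 1 := by
    decide
  have hne : (Multiplicative.ofAdd 1 : Multiplicative (ZMod 2)) ≠ 1 := by decide
  have hcase : ∀ a, (f a = 1 ∧ τ a = 1) ∨ (f a = Multiplicative.ofAdd 1 ∧ τ a = θ) := by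
    have hinv11 : (Multiplicative.ofAdd 1 : Multiplicative (ZMod 2))⁻¹ = Multiplicative.ofAdd 1 := by
      decide
    intro a
    induction a using FreeGroup.induction_on with
    | C1 => left; simp
    | of i => right; refine ⟨?_, hτo i⟩; fin_cases i <;> simp [hfx, hfy]
    | inv_of i ih =>
      rcases ih with ⟨h1, h2⟩ | ⟨h1, h2⟩
      · left; simp only [map_inv, h1, h2, inv_one, and_self]
      · right; simp only [map_inv, h1, h2, hinv11, hθinv, and_self]
    | mul a b iha ihb =>
      rcases iha with ⟨h1, h2⟩ | ⟨h1, h2⟩ <;> rcases ihb with ⟨h3, h4⟩ | ⟨h3, h4⟩ <;>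
        simp only [map_mul, h1, h2, h3, h4, h11, hθ2, one_mul, mul_one, and_self, true_or, or_true]
  have hττ : ∀ a b, τ (τ a b) = τ b := by
    intro a b
    rcases hcase a with ⟨_, h⟩ | ⟨_, h⟩ <;> simp [h, hτθ]
  let S := braceOf τ hττ
  have hS : ∀ a b, S.circ a b = a * τ a b := fun _ _ => rfl
  let v : Fin 2 → CircGroup S := fun i => (FreeGroup.of i : FreeGroup (Fin 2))
  obtain ⟨g₀, hg₀⟩ : ∃ g₀ : FreeGroup (Fin 2) →* CircGroup S,
      ∀ i, g₀ (FreeGroup.of i) = v i :=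
    ⟨FreeGroup.lift v, fun i => by rw [FreeGroup.lift_apply_of]⟩
  let g : FreeGroup (Fin 2) → FreeGroup (Fin 2) := g₀
  have hgo : ∀ i, g (FreeGroup.of i) = FreeGroup.of i := fun i => hg₀ i
  have hg1 : g 1 = 1 := map_one g₀
  have hgm : ∀ a b, g (a * b) = g a * τ (g a) (g b) := fun a b => map_mul g₀ a b
  have hτg : ∀ a, τ (g a) = τ a := by
    have hm : ∀ a b, τ (g (a * b)) = τ (g a) * τ (g b) := fun a b => by
      rw [hgm, map_mul, hττ]
    have : (MonoidHom.mk' (fun a => τ (g a)) hm) = τ := by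
      ext1 i; simp [hgo]
    exact fun a => DFunLike.congr_fun this a
  have hcomm : ∀ a b, τ a (θ b) = θ (τ a b) := by
    intro a b
    rcases hcase a with ⟨_, h⟩ | ⟨_, h⟩ <;> simp [h]
  have hgθ : ∀ a, g (θ a) = θ (g a) := by
    have hm : ∀ a b, θ (g (a * b)) = θ (g a) * τ (θ (g a)) (θ (g b)) := fun a b => by
      rw [hgm, map_mul, hτθ, hcomm]
    let k : FreeGroup (Fin 2) →* CircGroup S := MonoidHom.mk' (fun a => θ (g a)) hm
    have : g₀.comp θ.toMonoidHom = k := by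
      ext1 i
      change g (θ (FreeGroup.of i)) = θ (g (FreeGroup.of i))
      fin_cases i <;> simp [hθx, hθy, hgo]
    exact fun a => DFunLike.congr_fun this a
  have hgc : ∀ a b, g (S.circ a b) = g a * g b := by
    intro a b
    rw [hS, hgm, hτg]
    rcases hcase a with ⟨_, h⟩ | ⟨_, h⟩ <;> simp [h, hgθ, hθθ]
  have hgg : ∀ a, g (g a) = a := by
    have hm : ∀ a b, g (g (a * b)) = g (g a) * g (g b) := fun a b => by
      rw [hgm, ← hS, hgc]
    have : (MonoidHom.mk' (fun a => g (g a)) hm) = MonoidHom.id (FreeGroup (Fin 2)) := by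
      ext1 i; simp [hgo]
    exact fun a => DFunLike.congr_fun this a
  refine ⟨S, ?_, ?_, ⟨g, g, hgg, hgg⟩, hgc⟩
  · intro a ha b
    rw [MonoidHom.mem_ker] at ha
    rcases hcase a with ⟨_, h⟩ | ⟨hfa, h⟩
    · simp [hS, h]
    · exact absurd (hfa.symm.trans ha) hne
  · intro a ha b
    rw [MonoidHom.mem_ker] at ha
    rcases hcase a with ⟨hfa, h⟩ | ⟨hfa, h⟩
    · exact absurd hfa ha
    · simp [hS, h]
end

section
/- Let F₂ be the free group on free generators x and y, let θ be the automorphism of F₂ with θ(x) = x⁻¹ and θ(y) = y⁻¹, and let H₀ be the kernel of the homomorphism F₂ → ℤ/2ℤ sending both x and y to the generator. Define a∘b = a·b if a ∈ H₀ and a∘b = a·θ(b) if a ∉ H₀. Then (F₂, ·, ∘) is a skew left brace and the group (F₂, ∘) is isomorphic to the group presented by ⟨p, q, r, s | s² = 1, s p s = p⁻¹, s q s = q⁻¹, s r s = p r⁻¹ p⁻¹⟩, i.e., to a semidirect product F₃ ⋊ ℤ/2ℤ. -/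
/-- The relations of the presentation
`⟨p, q, r, s ∣ s² = 1, s p s = p⁻¹, s q s = q⁻¹, s r s = p r⁻¹ p⁻¹⟩`,
with generators indexed `p = 0`, `q = 1`, `r = 2`, `s = 3`; this group is a
semidirect product `F₃ ⋊ ℤ/2ℤ`. -/
def relsF3Z2 : Set (FreeGroup (Fin 4)) :=
  { FreeGroup.of 3 * FreeGroup.of 3,
    FreeGroup.of 3 * FreeGroup.of 0 * FreeGroup.of 3 * FreeGroup.of 0,
    FreeGroup.of 3 * FreeGroup.of 1 * FreeGroup.of 3 * FreeGroup.of 1,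
    FreeGroup.of 3 * FreeGroup.of 2 * FreeGroup.of 3 *
      FreeGroup.of 0 * FreeGroup.of 2 * (FreeGroup.of 0)⁻¹ }


open Classical in
/-- The brace attached to an involutive automorphism preserving a map to `ℤ/2`. -/
noncomputable def mkBrace {G : Type*} [Group G] (θ : MulAut G)
    (f : G →* Multiplicative (ZMod 2)) (h2 : ∀ a, θ (θ a) = a) (hf : ∀ a, f (θ a) = f a) :
    SkewBrace G where
  circ a b := if f a = 1 then a * b else a * θ b
  cinv a := if f a = 1 then a⁻¹ else θ a⁻¹
  circ_assoc a b c := by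
    have key : ∀ u v : Multiplicative (ZMod 2),
      (u ≠ 1 → v ≠ 1 → u * v = 1) := by decide
    by_cases ha : f a = 1 <;> by_cases hb : f b = 1
    · simp [ha, hb, mul_assoc]
    · simp [ha, hb, mul_assoc]
    · simp [ha, hb, hf, mul_assoc]
    · simp [ha, hb, hf, h2, key _ _ ha hb, mul_assoc]
  one_circ a := by simp
  circ_one a := by simp
  cinv_circ a := by by_cases ha : f a = 1 <;> simp [ha, hf]
  circ_cinv a := by by_cases ha : f a = 1 <;> simp [ha, h2]
  compat a b c := by by_cases ha : f a = 1 <;> simp [ha, mul_assoc]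

/-- The second group of a skew brace. -/
def CircG {G : Type*} [Group G] (_S : SkewBrace G) : Type _ := G

instance {G : Type*} [Group G] (S : SkewBrace G) : Group (CircG S) where
  mul a b := S.circ a b
  one := (1 : G)
  inv a := S.cinv a
  mul_assoc := S.circ_assoc
  one_mul := S.one_circ
  mul_one := S.circ_one
  inv_mul_cancel := S.cinv_circ

abbrev PG := PresentedGroup relsF3Z2
abbrev gp : PG := PresentedGroup.of 0
abbrev gq : PG := PresentedGroup.of 1
abbrev gr : PG := PresentedGroup.of 2
abbrev gs : PG := PresentedGroup.of 3

lemma rel_ss : gs * gs = 1 :=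
  PresentedGroup.one_of_mem (rels := relsF3Z2) (by simp [relsF3Z2])
lemma rel_sp : gs * gp * gs * gp = 1 :=
  PresentedGroup.one_of_mem (rels := relsF3Z2)
    (x := FreeGroup.of 3 * FreeGroup.of 0 * FreeGroup.of 3 * FreeGroup.of 0) (by simp [relsF3Z2])
lemma rel_sq : gs * gq * gs * gq = 1 :=
  PresentedGroup.one_of_mem (rels := relsF3Z2)
    (x := FreeGroup.of 3 * FreeGroup.of 1 * FreeGroup.of 3 * FreeGroup.of 1) (by simp [relsF3Z2])
lemma rel_sr : gs * gr * gs * gp * gr * gp⁻¹ = 1 :=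
  PresentedGroup.one_of_mem (rels := relsF3Z2)
    (x := FreeGroup.of 3 * FreeGroup.of 2 * FreeGroup.of 3 *
      FreeGroup.of 0 * FreeGroup.of 2 * (FreeGroup.of 0)⁻¹) (by simp [relsF3Z2])

lemma s_inv : gs⁻¹ = gs := inv_eq_of_mul_eq_one_left rel_ss
lemma ss' (a : PG) : gs * (gs * a) = a := by rw [← mul_assoc, rel_ss, one_mul]
lemma spp : gs * gp = gp⁻¹ * gs := by
  have h := rel_sp
  rw [mul_assoc, mul_eq_one_iff_eq_inv, mul_inv_rev, s_inv] at h
  exact h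
lemma sqq : gs * gq = gq⁻¹ * gs := by
  have h := rel_sq
  rw [mul_assoc, mul_eq_one_iff_eq_inv, mul_inv_rev, s_inv] at h
  exact h
lemma srr : gs * gr = gp * (gr⁻¹ * (gp⁻¹ * gs)) := by
  have h := rel_sr
  rw [mul_assoc, mul_assoc, mul_assoc, mul_eq_one_iff_eq_inv] at h
  rw [h]
  simp [s_inv, mul_assoc]
lemma spp' (a : PG) : gs * (gp * a) = gp⁻¹ * (gs * a) := by
  rw [← mul_assoc, spp, mul_assoc]
lemma sqq' (a : PG) : gs * (gq * a) = gq⁻¹ * (gs * a) := by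
  rw [← mul_assoc, sqq, mul_assoc]
lemma srr' (a : PG) : gs * (gr * a) = gp * (gr⁻¹ * (gp⁻¹ * (gs * a))) := by
  rw [← mul_assoc, srr]; simp only [mul_assoc]
lemma spi : gs * gp⁻¹ = gp * gs := by
  rw [mul_inv_eq_iff_eq_mul, mul_assoc, spp, mul_inv_cancel_left]
lemma sqi : gs * gq⁻¹ = gq * gs := by
  rw [mul_inv_eq_iff_eq_mul, mul_assoc, sqq, mul_inv_cancel_left]
lemma spi' (a : PG) : gs * (gp⁻¹ * a) = gp * (gs * a) := by
  rw [← mul_assoc, spi, mul_assoc]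
lemma sqi' (a : PG) : gs * (gq⁻¹ * a) = gq * (gs * a) := by
  rw [← mul_assoc, sqi, mul_assoc]

/-- The endomorphism of the presented group induced by `θ`. -/
def tauHom : PG →* PG :=
  PresentedGroup.toGroup (f := ![gp⁻¹, gr, gq, gp⁻¹ * gs]) (by
    intro w hw
    simp only [relsF3Z2, Set.mem_insert_iff, Set.mem_singleton_iff] at hw
    rcases hw with rfl | rfl | rfl | rfl <;>
      simp [mul_assoc, spp, sqq, srr, spp', sqq', srr', spi, sqi, spi', sqi', rel_ss, ss'])

@[simp] lemma tau_p : tauHom gp = gp⁻¹ := PresentedGroup.toGroup.of _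
@[simp] lemma tau_q : tauHom gq = gr := PresentedGroup.toGroup.of _
@[simp] lemma tau_r : tauHom gr = gq := PresentedGroup.toGroup.of _
@[simp] lemma tau_s : tauHom gs = gp⁻¹ * gs := PresentedGroup.toGroup.of _

lemma tau_tau : tauHom.comp tauHom = MonoidHom.id PG := by
  apply PresentedGroup.ext
  intro i
  fin_cases i
  · change tauHom (tauHom gp) = gp
    simp
  · change tauHom (tauHom gq) = gq
    simp
  · change tauHom (tauHom gr) = gr
    simp
  · change tauHom (tauHom gs) = gs
    simp

/-- `tauHom` as an automorphism. -/
def tau : MulAut PG := MonoidHom.toMulEquiv tauHom tauHom tau_tau tau_tau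

lemma tau_apply (a : PG) : tau a = tauHom a := rfl
lemma tau_sq : tau * tau = 1 := by
  ext a
  exact DFunLike.congr_fun tau_tau a
lemma tau_inv : tau⁻¹ = tau := inv_eq_of_mul_eq_one_left tau_sq

abbrev SD := PG ⋊[MonoidHom.id (MulAut PG)] (MulAut PG)

/-- The homomorphism of the free group to the holomorph. -/
def Psi : FreeGroup (Fin 2) →* SD :=
  FreeGroup.lift ![⟨gs, tau⟩, ⟨gq⁻¹ * gs, tau⟩]

lemma Psi_x : Psi (FreeGroup.of 0) = ⟨gs, tau⟩ := by simp [Psi]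
lemma Psi_y : Psi (FreeGroup.of 1) = ⟨gq⁻¹ * gs, tau⟩ := by simp [Psi]

/-- The underlying map of the isomorphism. -/
def eMap (a : FreeGroup (Fin 2)) : PG := (Psi a).left

lemma eMap_x : eMap (FreeGroup.of 0) = gs := by simp [eMap, Psi_x]
lemma eMap_y : eMap (FreeGroup.of 1) = gq⁻¹ * gs := by simp [eMap, Psi_y]
lemma eMap_xi : eMap (FreeGroup.of 0)⁻¹ = gp⁻¹ * gs := by
  simp [eMap, Psi_x, tau_inv, tau_apply, s_inv]
  try simp [mul_assoc, spi, spp]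
lemma eMap_yi : eMap (FreeGroup.of 1)⁻¹ = gp⁻¹ * (gs * gr) := by
  simp [eMap, Psi_y, tau_inv, tau_apply, s_inv, mul_assoc]
  try simp [spp, srr, mul_assoc]

lemma theta_theta (θ : MulAut (FreeGroup (Fin 2)))
    (hθx : θ (FreeGroup.of 0) = (FreeGroup.of 0)⁻¹)
    (hθy : θ (FreeGroup.of 1) = (FreeGroup.of 1)⁻¹) (a) : θ (θ a) = a := by
  have : θ.toMonoidHom.comp θ.toMonoidHom = MonoidHom.id _ := by
    ext i
    fin_cases i <;> simp [hθx, hθy]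
  exact DFunLike.congr_fun this a

lemma f_theta (θ : MulAut (FreeGroup (Fin 2)))
    (hθx : θ (FreeGroup.of 0) = (FreeGroup.of 0)⁻¹)
    (hθy : θ (FreeGroup.of 1) = (FreeGroup.of 1)⁻¹)
    (f : FreeGroup (Fin 2) →* Multiplicative (ZMod 2)) (a) : f (θ a) = f a := by
  have key : ∀ u : Multiplicative (ZMod 2), u⁻¹ = u := by decide
  have : f.comp θ.toMonoidHom = f := by
    apply FreeGroup.ext_hom
    intro i
    fin_cases i <;> simp [hθx, hθy, key]
  exact DFunLike.congr_fun this a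

lemma Psi_right (f : FreeGroup (Fin 2) →* Multiplicative (ZMod 2))
    (hfx : f (FreeGroup.of 0) = Multiplicative.ofAdd 1)
    (hfy : f (FreeGroup.of 1) = Multiplicative.ofAdd 1) (a : FreeGroup (Fin 2)) :
    (f a = 1 ∧ (Psi a).right = 1) ∨ (f a = Multiplicative.ofAdd 1 ∧ (Psi a).right = tau) := by
  have h11 : (Multiplicative.ofAdd 1 * Multiplicative.ofAdd 1 : Multiplicative (ZMod 2)) = 1 := by
    decide
  induction a using FreeGroup.induction_on with
  | C1 => left; simp
  | of i => right; fin_cases i <;> simp [hfx, hfy, Psi_x, Psi_y]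
  | inv_of i h =>
    rcases h with ⟨h, h'⟩ | ⟨h, h'⟩
    · left; simp [h, h']
    · right
      simp only [map_inv, SemidirectProduct.inv_right, h, h', tau_inv, and_true]
      decide
  | mul a b ha hb =>
    rcases ha with ⟨ha, ha'⟩ | ⟨ha, ha'⟩ <;> rcases hb with ⟨hb, hb'⟩ | ⟨hb, hb'⟩ <;>
      simp [ha, ha', hb, hb', tau_sq, h11]

lemma eMap_theta (θ : MulAut (FreeGroup (Fin 2)))
    (hθx : θ (FreeGroup.of 0) = (FreeGroup.of 0)⁻¹)
    (hθy : θ (FreeGroup.of 1) = (FreeGroup.of 1)⁻¹) (a) : eMap (θ a) = tau (eMap a) := by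
  have : Psi.comp θ.toMonoidHom = (MulAut.conj (SemidirectProduct.inr tau)).toMonoidHom.comp Psi := by
    apply FreeGroup.ext_hom
    intro i
    fin_cases i
    · ext1
      · have h : eMap (FreeGroup.of 0)⁻¹ = gp⁻¹ * gs := eMap_xi
        simp only [eMap] at h
        simp [hθx, Psi_x, tau_apply, tau_inv, s_inv] at h ⊢
        try exact h
      · simp [hθx, Psi_x, tau_inv, tau_sq]
    · ext1
      · have h := eMap_yi
        simp only [eMap] at h
        simp [hθy, Psi_y, tau_apply, tau_inv, s_inv, srr, spp, spp', mul_assoc] at h ⊢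
      · simp [hθy, Psi_y, tau_inv, tau_sq]
  have h := congrArg SemidirectProduct.left (DFunLike.congr_fun this a)
  simpa [eMap] using h

/-- Let `F₂` be the free group on `x, y`, let `θ` be the
automorphism with `θ x = x⁻¹` and `θ y = y⁻¹`, and let `H₀` be the kernel of
the homomorphism `F₂ → ℤ/2ℤ` sending both generators to the generator.
Define `a ∘ b = a * b` for `a ∈ H₀` and `a ∘ b = a * θ b` otherwise.  Then
`(F₂, ·, ∘)` is a skew left brace and `(F₂, ∘)` is isomorphic to the group
presented by `⟨p, q, r, s ∣ s² = 1, s p s = p⁻¹, s q s = q⁻¹,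
s r s = p r⁻¹ p⁻¹⟩`, i.e. to a semidirect product `F₃ ⋊ ℤ/2ℤ`. -/
theorem stmt9 (θ : MulAut (FreeGroup (Fin 2)))
    (hθx : θ (FreeGroup.of 0) = (FreeGroup.of 0)⁻¹)
    (hθy : θ (FreeGroup.of 1) = (FreeGroup.of 1)⁻¹)
    (f : FreeGroup (Fin 2) →* Multiplicative (ZMod 2))
    (hfx : f (FreeGroup.of 0) = Multiplicative.ofAdd 1)
    (hfy : f (FreeGroup.of 1) = Multiplicative.ofAdd 1) :
    ∃ S : SkewBrace (FreeGroup (Fin 2)),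
      (∀ a ∈ f.ker, ∀ b : FreeGroup (Fin 2), S.circ a b = a * b) ∧
      (∀ a ∉ f.ker, ∀ b : FreeGroup (Fin 2), S.circ a b = a * θ b) ∧
      ∃ e : FreeGroup (Fin 2) ≃ PresentedGroup relsF3Z2,
        ∀ a b : FreeGroup (Fin 2), e (S.circ a b) = e a * e b := by
  have h2 := theta_theta θ hθx hθy
  have hf := f_theta θ hθx hθy f
  have hne : (Multiplicative.ofAdd 1 : Multiplicative (ZMod 2)) ≠ 1 := by decide
  have h11 : (Multiplicative.ofAdd 1 * Multiplicative.ofAdd 1 : Multiplicative (ZMod 2)) = 1 := by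
    decide
  have hinv : ((Multiplicative.ofAdd 1)⁻¹ : Multiplicative (ZMod 2)) = Multiplicative.ofAdd 1 := by
    decide
  let S := mkBrace θ f h2 hf
  have c1 : ∀ a b, f a = 1 → S.circ a b = a * b := fun a b h => if_pos h
  have c2 : ∀ a b, f a ≠ 1 → S.circ a b = a * θ b := fun a b h => if_neg h
  have i1 : ∀ a, f a = 1 → S.cinv a = a⁻¹ := fun a h => if_pos h
  have he : ∀ a b, eMap (S.circ a b) = eMap a * eMap b := by
    intro a b
    rcases Psi_right f hfx hfy a with ⟨h, h'⟩ | ⟨h, h'⟩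
    · rw [c1 a b h]
      simp [eMap, h']
    · rw [c2 a b (h ▸ hne)]
      have ht : (Psi (θ b)).left = tau (Psi b).left := eMap_theta θ hθx hθy b
      have ht2 : tau (tau (Psi b).left) = (Psi b).left :=
        DFunLike.congr_fun tau_sq (Psi b).left
      simp [eMap, h', ht, ht2]
  let x : FreeGroup (Fin 2) := FreeGroup.of 0
  let y : FreeGroup (Fin 2) := FreeGroup.of 1
  have fx : f x = Multiplicative.ofAdd 1 := hfx
  have fy : f y = Multiplicative.ofAdd 1 := hfy
  have tx : θ x = x⁻¹ := hθx
  have ty : θ y = y⁻¹ := hθy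
  have fp : f (x * x) = 1 := by rw [map_mul, fx, h11]
  have fq : f (x * y⁻¹) = 1 := by rw [map_mul, map_inv, fx, fy, hinv, h11]
  have fr : f (x⁻¹ * y) = 1 := by rw [map_mul, map_inv, fx, fy, hinv, h11]
  have fx' : f x ≠ 1 := fx ▸ hne
  let v : Fin 4 → CircG S := ![(x * x : FreeGroup (Fin 2)), (x * y⁻¹ : FreeGroup (Fin 2)),
    (x⁻¹ * y : FreeGroup (Fin 2)), x]
  have mul1 : ∀ a b : FreeGroup (Fin 2), f a = 1 →
      @HMul.hMul (CircG S) (CircG S) _ _ a b = (a * b : FreeGroup (Fin 2)) := c1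
  have mul2 : ∀ a b : FreeGroup (Fin 2), f a ≠ 1 →
      @HMul.hMul (CircG S) (CircG S) _ _ a b = (a * θ b : FreeGroup (Fin 2)) := c2
  have hv : ∀ w ∈ relsF3Z2, FreeGroup.lift v w = 1 := by
    intro w hw
    simp only [relsF3Z2, Set.mem_insert_iff, Set.mem_singleton_iff] at hw
    rcases hw with rfl | rfl | rfl | rfl <;>
      simp only [map_mul, map_inv, FreeGroup.lift_apply_of]
    · change S.circ x x = 1
      rw [c2 _ _ fx', tx, mul_inv_cancel]
    · change S.circ (S.circ (S.circ x (x * x)) x) (x * x) = 1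
      rw [c2 _ _ fx', c2 _ x, c1] <;> simp [tx, fx, hne, hinv, h11]
    · change S.circ (S.circ (S.circ x (x * y⁻¹)) x) (x * y⁻¹) = 1
      rw [c2 _ _ fx', c2 _ x, c1] <;> simp [tx, ty, fx, fy, hne, hinv, h11]
    · change S.circ (S.circ (S.circ (S.circ (S.circ x (x⁻¹ * y)) x) (x * x)) (x⁻¹ * y))
        (S.cinv (x * x)) = 1
      rw [i1 _ fp, c2 _ _ fx', c2 _ x, c1 _ (x * x), c1 _ (x⁻¹ * y), c1] <;>
        simp [tx, ty, fx, fy, hne, hinv, h11, mul_assoc]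
  let g : PG →* CircG S := PresentedGroup.toGroup hv
  have g_p : g gp = (x * x : FreeGroup (Fin 2)) := PresentedGroup.toGroup.of hv
  have g_q : g gq = (x * y⁻¹ : FreeGroup (Fin 2)) := PresentedGroup.toGroup.of hv
  have g_r : g gr = (x⁻¹ * y : FreeGroup (Fin 2)) := PresentedGroup.toGroup.of hv
  have g_s : g gs = x := PresentedGroup.toGroup.of hv
  let E : CircG S →* PG := MonoidHom.mk' eMap he
  have ex : eMap x = gs := eMap_x
  have ey : eMap y = gq⁻¹ * gs := eMap_y
  have exi : eMap x⁻¹ = gp⁻¹ * gs := eMap_xi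
  have eyi : eMap y⁻¹ = gp⁻¹ * (gs * gr) := eMap_yi
  have em : ∀ a b, f a ≠ 1 → eMap (a * b) = eMap a * eMap (θ b) := by
    intro a b h
    rw [← he, c2 _ _ h, h2]
  have left : ∀ z, eMap (g z) = z := by
    have : E.comp g = MonoidHom.id PG := by
      apply PresentedGroup.ext
      intro i
      fin_cases i
      · change eMap (g gp) = gp
        rw [g_p, em _ _ fx', tx, ex, exi, spi', rel_ss, mul_one]
      · change eMap (g gq) = gq
        rw [g_q, em _ _ fx', map_inv, ty, inv_inv, ex, ey, sqi', rel_ss, mul_one]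
      · change eMap (g gr) = gr
        rw [g_r, em _ _ (by rw [map_inv, fx, hinv]; exact hne), ty, exi, eyi]
        simp only [mul_assoc, spi', ss', inv_mul_cancel_left]
      · change eMap (g gs) = gs
        rw [g_s, ex]
    exact fun z => DFunLike.congr_fun this z
  have rx : g (eMap x) = x := by rw [ex, g_s]
  have ry : g (eMap y) = y := by
    rw [ey, map_mul, map_inv, g_q, g_s]
    change S.circ (S.cinv (x * y⁻¹)) x = y
    rw [i1 _ fq, c1 _ _ (by rw [map_inv, fq, inv_one])]
    simp
  have rxi : g (eMap x⁻¹) = (x⁻¹ : FreeGroup (Fin 2)) := by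
    rw [exi, map_mul, map_inv, g_p, g_s]
    change S.circ (S.cinv (x * x)) x = x⁻¹
    rw [i1 _ fp, c1 _ _ (by rw [map_inv, fp, inv_one])]
    simp
  have ryi : g (eMap y⁻¹) = (y⁻¹ : FreeGroup (Fin 2)) := by
    rw [eyi, map_mul, map_mul, map_inv, g_p, g_s, g_r]
    change S.circ (S.cinv (x * x)) (S.circ x (x⁻¹ * y)) = y⁻¹
    rw [i1 _ fp, c1 _ _ (by rw [map_inv, fp, inv_one]), c2 _ _ fx']
    simp [tx, ty]
  have gmul : ∀ a b, g (eMap (S.circ a b)) = S.circ (g (eMap a)) (g (eMap b)) := by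
    intro a b
    rw [he, map_mul]
    rfl
  -- the fixed set is stable under `θ` and products
  have right : ∀ a : FreeGroup (Fin 2), g (eMap a) = a ∧ g (eMap (θ a)) = θ a := by
    intro a
    induction a using FreeGroup.induction_on with
    | C1 =>
      have h1 : g (eMap 1) = (1 : FreeGroup (Fin 2)) := by
        have : eMap 1 = 1 := by simp [eMap]
        rw [this, map_one]; rfl
      rw [map_one]
      exact ⟨h1, h1⟩
    | of i =>
      fin_cases i
      · exact ⟨rx, by change g (eMap (θ x)) = θ x; rw [tx]; exact rxi⟩
      · exact ⟨ry, by change g (eMap (θ y)) = θ y; rw [ty]; exact ryi⟩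
    | inv_of i _ =>
      fin_cases i
      · exact ⟨rxi, by change g (eMap (θ x⁻¹)) = θ x⁻¹; rw [map_inv, tx, inv_inv]; exact rx⟩
      · exact ⟨ryi, by change g (eMap (θ y⁻¹)) = θ y⁻¹; rw [map_inv, ty, inv_inv]; exact ry⟩
    | mul a b ha hb =>
      by_cases h : f a = 1
      · have h' : f (θ a) = 1 := by rw [hf, h]
        rw [map_mul, ← c1 _ _ h, ← c1 _ _ h', gmul, gmul, ha.1, ha.2, hb.1, hb.2]
        exact ⟨rfl, rfl⟩
      · have h' : f (θ a) ≠ 1 := by rw [hf]; exact h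
        have e1 : a * b = S.circ a (θ b) := by rw [c2 _ _ h, h2]
        have e2 : θ (a * b) = S.circ (θ a) b := by rw [c2 _ _ h', map_mul]
        rw [e2, e1, gmul, gmul, ha.1, ha.2, hb.1, hb.2]
        exact ⟨rfl, rfl⟩
  exact ⟨S, fun a h b => c1 a b h, fun a h b => c2 a b h,
    ⟨eMap, g, fun a => (right a).1, left⟩, he⟩
end

section
/- Fix p ∈ ℤ and define an operation ∘ on ℤ × ℤ by (a₁,a₂) ∘ (b₁,b₂) = (a₁ + b₁ + p(a₁+a₂)(b₁+b₂), a₂ + b₂ − p(a₁+a₂)(b₁+b₂)). Then (ℤ², ∘) is a group with identity (0,0), and the inverse of a = (a₁,a₂) is ā = (−a₁ + p(a₁+a₂)², −a₂ − p(a₁+a₂)²); that is, a ∘ ā = ā ∘ a = (0,0). -/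
/-- The operation `∘` on `ℤ × ℤ` determined by the parameter `p`:
`(a₁,a₂) ∘ (b₁,b₂) = (a₁ + b₁ + p(a₁+a₂)(b₁+b₂), a₂ + b₂ − p(a₁+a₂)(b₁+b₂))`. -/
def circP (p : ℤ) (a b : ℤ × ℤ) : ℤ × ℤ :=
  (a.1 + b.1 + p * (a.1 + a.2) * (b.1 + b.2),
   a.2 + b.2 - p * (a.1 + a.2) * (b.1 + b.2))

/-- The inverse of `a` for the operation `circP p`:
`ā = (−a₁ + p(a₁+a₂)², −a₂ − p(a₁+a₂)²)`. -/
def cinvP (p : ℤ) (a : ℤ × ℤ) : ℤ × ℤ :=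
  (-a.1 + p * (a.1 + a.2) ^ 2, -a.2 - p * (a.1 + a.2) ^ 2)

/-- For each `p : ℤ`, `(ℤ², ∘)` is a group with identity
`(0, 0)`, and the inverse of `a = (a₁, a₂)` is
`ā = (−a₁ + p(a₁+a₂)², −a₂ − p(a₁+a₂)²)`, i.e. `a ∘ ā = ā ∘ a = (0, 0)`. -/
theorem stmt12 (p : ℤ) :
    (∀ a b c : ℤ × ℤ, circP p (circP p a b) c = circP p a (circP p b c)) ∧
    (∀ a : ℤ × ℤ, circP p ((0 : ℤ), (0 : ℤ)) a = a) ∧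
    (∀ a : ℤ × ℤ, circP p a ((0 : ℤ), (0 : ℤ)) = a) ∧
    (∀ a : ℤ × ℤ, circP p a (cinvP p a) = ((0 : ℤ), (0 : ℤ)) ∧
      circP p (cinvP p a) a = ((0 : ℤ), (0 : ℤ))) := by
  refine ⟨fun a b c => ?_, fun a => ?_, fun a => ?_, fun a => ⟨?_, ?_⟩⟩ <;>
    ext <;> simp only [circP, cinvP] <;> ring
end

section
/- A skew left brace (G, ·, ∘) is symmetric if and only if b̄ ∘ (a·b) ∘ ā ∈ ker λ for all a, b ∈ G, where ā and b̄ denote the inverses of a and b in (G, ∘) and ker λ = {g ∈ G : λ_g = id}. -/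
/-- The lambda map. -/
def SkewBrace.lam {G : Type*} [Group G] (B : SkewBrace G) (a b : G) : G := a⁻¹ * B.circ a b

theorem SkewBrace.circ_eq {G : Type*} [Group G] (B : SkewBrace G) (a b : G) :
    B.circ a b = a * B.lam a b := by
  simp [SkewBrace.lam]

theorem SkewBrace.lam_circ {G : Type*} [Group G] (B : SkewBrace G) (a b c : G) :
    B.lam (B.circ a b) c = B.lam a (B.lam b c) := by
  have h := B.compat a b b⁻¹
  rw [mul_inv_cancel, B.circ_one] at h
  have h2 : B.circ a b⁻¹ = a * (B.circ a b)⁻¹ * a := by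
    calc B.circ a b⁻¹ = a * (B.circ a b)⁻¹ * (B.circ a b * a⁻¹ * B.circ a b⁻¹) := by group
      _ = _ := by rw [← h]
  unfold SkewBrace.lam
  rw [B.compat, h2, B.circ_assoc]
  group

theorem SkewBrace.lam_one {G : Type*} [Group G] (B : SkewBrace G) (c : G) :
    B.lam 1 c = c := by
  simp [SkewBrace.lam, B.one_circ]

theorem SkewBrace.cinv_circ_mul {G : Type*} [Group G] (B : SkewBrace G) (a c : G) :
    B.circ (B.cinv a) (a * c) = B.lam (B.cinv a) c := by
  rw [B.compat, B.cinv_circ, SkewBrace.lam, one_mul]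

/-- A skew left brace `(G, ·, ∘)` is symmetric (i.e.
`(G, ∘, ·)` is also a skew left brace:
`a * (b ∘ c) = ((a * b) ∘ ā) ∘ (a * c)` for all `a b c`) if and only if
`b̄ ∘ (a * b) ∘ ā ∈ ker λ` for all `a b : G`, where an element `g` lies in
`ker λ` precisely when `g ∘ c = g * c` for all `c`. -/
theorem stmt15 {G : Type*} [Group G] (B : SkewBrace G) :
    (∀ a b c : G,
        a * B.circ b c = B.circ (B.circ (a * b) (B.cinv a)) (a * c)) ↔
      (∀ a b : G, ∀ c : G,
        B.circ (B.circ (B.circ (B.cinv b) (a * b)) (B.cinv a)) c =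
          B.circ (B.circ (B.cinv b) (a * b)) (B.cinv a) * c) := by
  constructor
  · intro h a b c
    have h1 := h a b c
    rw [B.circ_assoc, B.cinv_circ_mul, B.circ_eq b c, B.circ_eq (a * b), ← mul_assoc,
      mul_right_inj] at h1
    rw [B.circ_eq _ c, B.lam_circ, B.lam_circ, ← h1, ← B.lam_circ, B.cinv_circ, B.lam_one]
  · intro h a b c
    have h1 := h a b c
    rw [B.circ_eq _ c, mul_right_inj, B.lam_circ, B.lam_circ] at h1
    rw [B.circ_assoc, B.cinv_circ_mul, B.circ_eq b c, B.circ_eq (a * b), ← mul_assoc,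
      mul_right_inj]
    conv_lhs => rw [← h1]
    rw [← B.lam_circ b, B.circ_cinv, B.lam_one]
end

section
/- Every λ-cyclic skew left brace is symmetric: if (G, ·, ∘) is a skew left brace such that the map λ : G → Aut(G,·), λ_a(b) = a⁻¹·(a∘b), is a group homomorphism from (G,·) whose image is a cyclic subgroup of Aut(G,·), then (G, ∘, ·) is also a skew left brace. -/
/-- Every λ-cyclic skew left brace is symmetric: if
`(G, ·, ∘)` is a skew left brace such that `λ_a (b) = a⁻¹ * (a ∘ b)` is
multiplicative in `a` with respect to `·` and every `λ_a` is a power of a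
single automorphism `φ` of `(G, ·)` (the image of `λ` is cyclic), then
`(G, ∘, ·)` is also a skew left brace, i.e.
`a * (b ∘ c) = ((a * b) ∘ ā) ∘ (a * c)` for all `a b c : G`. -/
theorem stmt17 {G : Type*} [Group G] (B : SkewBrace G)
    (lam_hom : ∀ a b c : G,
      (a * b)⁻¹ * B.circ (a * b) c = a⁻¹ * B.circ a (b⁻¹ * B.circ b c))
    (lam_cyclic : ∃ φ : MulAut G, ∀ a : G, ∃ k : ℤ,
      ∀ b : G, a⁻¹ * B.circ a b = (φ ^ k) b) :
    ∀ a b c : G,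
      a * B.circ b c = B.circ (B.circ (a * b) (B.cinv a)) (a * c) := by
  intro a b c
  obtain ⟨φ, hφ⟩ := lam_cyclic
  obtain ⟨L, hL⟩ : ∃ L : G → G → G, ∀ x y, L x y = x⁻¹ * B.circ x y := ⟨_, fun _ _ => rfl⟩
  have hc : ∀ x y, B.circ x y = x * L x y := by intro x y; simp [hL]
  have hmul : ∀ x y z, L x (y * z) = L x y * L x z := by
    intro x y z; simp only [hL, B.compat, mul_assoc]
  have hhom : ∀ x y z, L (x * y) z = L x (L y z) := by
    intro x y z; simp only [hL]; exact lam_hom x y z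
  have hchom : ∀ x y z, L (B.circ x y) z = L x (L y z) := by
    intro x y z
    rw [hL (B.circ x y), B.circ_assoc, hc y z, B.compat, hL x (L y z)]
    group
  have hcomm : ∀ x y z, L x (L y z) = L y (L x z) := by
    intro x y z
    obtain ⟨k, hk⟩ := hφ x
    obtain ⟨l, hl⟩ := hφ y
    have hk' : ∀ w, L x w = (φ ^ k) w := fun w => by rw [hL, hk]
    have hl' : ∀ w, L y w = (φ ^ l) w := fun w => by rw [hL, hl]
    rw [hk', hl', hl', hk', ← MulAut.mul_apply, ← MulAut.mul_apply, ← zpow_add, ← zpow_add,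
      add_comm]
  have hone : ∀ z, L 1 z = z := by intro z; simp [hL, B.one_circ]
  have hinv : ∀ z, L a (L (B.cinv a) z) = z := by
    intro z; rw [← hchom, B.circ_cinv, hone]
  have hca : L a (B.cinv a) = a⁻¹ := by
    rw [hL, B.circ_cinv, mul_one]
  have hx : B.circ (a * b) (B.cinv a) = a * b * L b a⁻¹ := by
    rw [hc, hhom, hcomm, hca]
  have hLx : ∀ z, L (B.circ (a * b) (B.cinv a)) z = L b z := by
    intro z; rw [hchom, hhom, hcomm a b, hinv]
  rw [hc (B.circ (a * b) (B.cinv a)), hLx, hx, mul_assoc (a * b), ← hmul, inv_mul_cancel_left,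
    hc b c, mul_assoc]
end

section
/- Let G be a group with an exact factorization G = A·B, where A is a normal subgroup of G, B is a subgroup of G, A ∩ B = 1, and every element of G is (uniquely) a product a·b with a ∈ A, b ∈ B. Define an operation ∘ on G by (a₁·b₁) ∘ (a₂·b₂) = a₁·a₂·b₂·b₁ for a₁,a₂ ∈ A and b₁,b₂ ∈ B. Then (G, ·, ∘) is a skew left brace, the group (G, ∘) is isomorphic to the direct product A × B^op (B^op the opposite group of B), and this skew brace is symmetric, i.e., (G, ∘, ·) is also a skew left brace. -/
/-- Let `G = A · B` be an exact factorization (`A ⊴ G`,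
`B ≤ G`, `A ∩ B = 1`, every element of `G` is a product `a * b` with `a ∈ A`,
`b ∈ B`) and let `∘` be the operation with
`(a₁ * b₁) ∘ (a₂ * b₂) = a₁ * a₂ * b₂ * b₁`.  Then `(G, ·, ∘)` is a skew
left brace, `(G, ∘)` is isomorphic to `A × Bᵒᵖ`, and the skew brace is
symmetric, i.e. `(G, ∘, ·)` is also a skew left brace. -/
theorem stmt18 {G : Type*} [Group G] (A B : Subgroup G) [A.Normal]
    (hAB : A ⊓ B = ⊥)
    (hfact : ∀ g : G, ∃ a ∈ A, ∃ b ∈ B, g = a * b)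
    (circ : G → G → G)
    (hcirc : ∀ a₁ ∈ A, ∀ b₁ ∈ B, ∀ a₂ ∈ A, ∀ b₂ ∈ B,
      circ (a₁ * b₁) (a₂ * b₂) = a₁ * a₂ * b₂ * b₁) :
    ∃ S : SkewBrace G, S.circ = circ ∧
      (∃ e : G ≃ A × (↥B)ᵐᵒᵖ, ∀ x y : G, e (circ x y) = e x * e y) ∧
      (∀ x y z : G,
        x * circ y z = circ (circ (x * y) (S.cinv x)) (x * z)) := by
  have hc : ∀ a ∈ A, ∀ b ∈ B, ∀ y, circ (a * b) y = a * y * b := by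
    intro a ha b hb y
    obtain ⟨c, hc, d, hd, rfl⟩ := hfact y
    rw [hcirc a ha b hb c hc d hd]
    group
  have huniq : ∀ a ∈ A, ∀ b ∈ B, ∀ c ∈ A, ∀ d ∈ B, a * b = c * d → a = c ∧ b = d := by
    intro a ha b hb c hc d hd h
    have h1 : c⁻¹ * a = d * b⁻¹ := by
      rw [inv_mul_eq_iff_eq_mul, ← mul_assoc, ← h]
      group
    have h2 : c⁻¹ * a ∈ A ⊓ B :=
      ⟨A.mul_mem (A.inv_mem hc) ha, h1 ▸ B.mul_mem hd (B.inv_mem hb)⟩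
    rw [hAB, Subgroup.mem_bot, inv_mul_eq_one] at h2
    subst h2
    exact ⟨rfl, mul_left_cancel h⟩
  choose α hα β hβ hαβ using hfact
  have hx : ∀ x y, circ x y = α x * y * β x := by
    intro x y
    have := hc _ (hα x) _ (hβ x) y
    rwa [← hαβ x] at this
  have hu : ∀ a ∈ A, ∀ b ∈ B, α (a * b) = a ∧ β (a * b) = b := by
    intro a ha b hb
    exact huniq _ (hα _) _ (hβ _) a ha b hb (hαβ _).symm
  have hcab : ∀ x y, circ x y = (α x * α y) * (β y * β x) := by
    intro x y
    rw [hx]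
    conv_lhs => rw [hαβ y]
    group
  have hci : ∀ x y, α (circ x y) = α x * α y ∧ β (circ x y) = β y * β x := by
    intro x y
    rw [hcab]
    exact hu _ (A.mul_mem (hα _) (hα _)) _ (B.mul_mem (hβ _) (hβ _))
  have h1 := hu 1 A.one_mem 1 B.one_mem
  rw [mul_one] at h1
  have hi : ∀ x, α ((α x)⁻¹ * (β x)⁻¹) = (α x)⁻¹ ∧ β ((α x)⁻¹ * (β x)⁻¹) = (β x)⁻¹ :=
    fun x => hu _ (A.inv_mem (hα _)) _ (B.inv_mem (hβ _))
  refine ⟨{ circ := circ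
            cinv := fun x => (α x)⁻¹ * (β x)⁻¹
            circ_assoc := ?_
            one_circ := ?_
            circ_one := ?_
            cinv_circ := ?_
            circ_cinv := ?_
            compat := ?_ }, rfl, ⟨{ toFun := fun x => (⟨α x, hα x⟩, MulOpposite.op ⟨β x, hβ x⟩)
                                    invFun := fun p => p.1.1 * p.2.unop.1
                                    left_inv := fun x => (hαβ x).symm
                                    right_inv := ?_ }, ?_⟩, ?_⟩
  · intro a b c
    rw [hx (circ a b), (hci a b).1, (hci a b).2, hx a, hx b]
    group
  · intro a
    rw [hx, h1.1, h1.2]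
    group
  · intro a
    rw [hx, mul_one, ← hαβ]
  · intro a
    rw [hcab, (hi a).1, (hi a).2]
    group
  · intro a
    rw [hcab, (hi a).1, (hi a).2]
    group
  · intro a b c
    have h : a⁻¹ = (β a)⁻¹ * (α a)⁻¹ := by rw [← mul_inv_rev, ← hαβ]
    rw [hx, hx, hx, h]
    group
  · rintro ⟨⟨a, ha⟩, ⟨b, hb⟩⟩
    have := hu a ha b hb
    ext
    · exact this.1
    · exact MulOpposite.unop_injective (Subtype.ext this.2)
  · intro x y
    have := hci x y
    ext
    · exact this.1
    · exact MulOpposite.unop_injective (Subtype.ext this.2)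
  · intro x y z
    have hn : x * α y * x⁻¹ ∈ A := Subgroup.Normal.conj_mem inferInstance _ (hα y) x
    have e : circ (x * y) ((α x)⁻¹ * (β x)⁻¹) = (x * α y * x⁻¹) * β y := by
      have hm : β x * α y * (β x)⁻¹ ∈ A := Subgroup.Normal.conj_mem inferInstance _ (hα y) _
      have hxy : x * y = (α x * (β x * α y * (β x)⁻¹)) * (β x * β y) := by
        conv_lhs => rw [hαβ x, hαβ y]
        group
      rw [hxy, hc _ (A.mul_mem (hα x) hm) _ (B.mul_mem (hβ x) (hβ y))]
      have h : x * α y * x⁻¹ = (α x * β x) * α y * (α x * β x)⁻¹ := by rw [← hαβ]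
      rw [h]
      group
    change x * circ y z = circ (circ (x * y) ((α x)⁻¹ * (β x)⁻¹)) (x * z)
    rw [e, hc _ hn _ (hβ y), hx]
    group
end

section
/- Let G be a group with an exact factorization G = A·B, where A is a normal subgroup of G, B is a subgroup of G, A ∩ B = 1, and every element z ∈ G is uniquely z = a·b with a ∈ A, b ∈ B. Consider the skew left brace (G, ·, ∘) with (a₁·b₁) ∘ (a₂·b₂) = a₁·a₂·b₂·b₁; its associated map λ sends z = a·b to the inner automorphism λ_z(y) = b⁻¹·y·b. If B is abelian, then λ : (G, ·) → Aut(G, ·), z ↦ λ_z, is a group homomorphism; that is, the skew brace (G, ·, ∘) is λ-homomorphic. -/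
/-- Let `G = A · B` be an exact factorization (`A ⊴ G`,
`B ≤ G`, `A ∩ B = 1`, every element of `G` is a product `a * b` with `a ∈ A`,
`b ∈ B`), and let `∘` be the skew brace operation
`(a₁ * b₁) ∘ (a₂ * b₂) = a₁ * a₂ * b₂ * b₁`, whose associated map `λ` sends
`z = a * b` to the inner automorphism `λ_z (y) = b⁻¹ * y * b` (first
conjunct).  If `B` is abelian, then `λ : (G, ·) → Aut (G, ·)` is a group
homomorphism, i.e. `λ_{z·w} = λ_z ∘ λ_w` (second conjunct): the skew brace
is λ-homomorphic. -/
theorem stmt19 {G : Type*} [Group G] (A B : Subgroup G) [A.Normal]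
    (hAB : A ⊓ B = ⊥)
    (hfact : ∀ g : G, ∃ a ∈ A, ∃ b ∈ B, g = a * b)
    (hBcomm : ∀ b₁ ∈ B, ∀ b₂ ∈ B, b₁ * b₂ = b₂ * b₁)
    (circ : G → G → G)
    (hcirc : ∀ a₁ ∈ A, ∀ b₁ ∈ B, ∀ a₂ ∈ A, ∀ b₂ ∈ B,
      circ (a₁ * b₁) (a₂ * b₂) = a₁ * a₂ * b₂ * b₁) :
    (∀ a ∈ A, ∀ b ∈ B, ∀ y : G,
      (a * b)⁻¹ * circ (a * b) y = b⁻¹ * y * b) ∧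
    (∀ z w y : G,
      (z * w)⁻¹ * circ (z * w) y = z⁻¹ * circ z (w⁻¹ * circ w y)) := by
  have key : ∀ a ∈ A, ∀ b ∈ B, ∀ y : G,
      (a * b)⁻¹ * circ (a * b) y = b⁻¹ * y * b := by
    intro a ha b hb y
    obtain ⟨a₂, ha₂, b₂, hb₂, rfl⟩ := hfact y
    rw [hcirc a ha b hb a₂ ha₂ b₂ hb₂]
    group
  refine ⟨key, ?_⟩
  intro z w y
  obtain ⟨a, ha, b, hb, rfl⟩ := hfact z
  obtain ⟨c, hc, d, hd, rfl⟩ := hfact w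
  have hmem : a * (b * c * b⁻¹) ∈ A :=
    A.mul_mem ha (Subgroup.Normal.conj_mem inferInstance c hc b)
  have hprod : a * b * (c * d) = (a * (b * c * b⁻¹)) * (b * d) := by group
  rw [key a ha b hb, key c hc d hd, hprod, key _ hmem _ (B.mul_mem hb hd),
    hBcomm b hb d hd]
  group
end
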